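/- Let (γ_k)_{k≥1} be a sequence of positive real numbers, let (a_k)_{k≥1} be a real sequence with Σ_{k=1}^∞ a_k² < ∞, and let T > 0. Then ∫₀ᵀ ( Σ_{k=1}^∞ γ_k^{1/2} e^{−2γ_k t} a_k² )² dt ≤ (1/4)·( Σ_{k=1}^∞ a_k² )². -/

import Mathlib

open MeasureTheory

/-- A family dominated by the geometric mean of two summable families is summable. -/
lemma summable_of_sq_le_mul {ι : Type*} {r f g : ι → ℝ} (hr : ∀ i, 0 ≤ r i)
    (hf : ∀ i, 0 ≤ f i) (hg : ∀ i, 0 ≤ g i) (h : ∀ i, r i ^ 2 ≤ f i * g i)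
    (hfs : Summable f) (hgs : Summable g) : Summable r := by
  refine .of_nonneg_of_le hr (fun i => ?_) (hfs.add hgs)
  refine (abs_le_of_sq_le_sq' ?_ (add_nonneg (hf i) (hg i))).2
  nlinarith [h i, sq_nonneg (f i), sq_nonneg (g i), mul_nonneg (hf i) (hg i)]

/-- **Cauchy-Schwarz inequality** for infinite sums, squared version. -/
lemma tsum_sq_le_tsum_mul_tsum_of_sq_le_mul {ι : Type*} {r f g : ι → ℝ} (hr : ∀ i, 0 ≤ r i)
    (hf : ∀ i, 0 ≤ f i) (hg : ∀ i, 0 ≤ g i) (h : ∀ i, r i ^ 2 ≤ f i * g i)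
    (hfs : Summable f) (hgs : Summable g) :
    (∑' i, r i) ^ 2 ≤ (∑' i, f i) * ∑' i, g i :=
  le_of_tendsto_of_tendsto' ((summable_of_sq_le_mul hr hf hg h hfs hgs).hasSum.pow 2)
    (Filter.Tendsto.mul hfs.hasSum hgs.hasSum) fun s =>
      s.sum_sq_le_sum_mul_sum_of_sq_le_mul (fun i _ => hf i) (fun i _ => hg i) fun i _ => h i

lemma integral_Ioi_mul_exp_neg_four_mul {c : ℝ} (hc : 0 < c) (b : ℝ) :
    ∫ t in Set.Ioi (0 : ℝ), c * Real.exp (-4 * c * t) * b = 1 / 4 * b := by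
  rw [integral_mul_const, integral_const_mul, integral_exp_mul_Ioi (by linarith)]
  simp only [mul_zero, Real.exp_zero]
  field_simp

lemma mul_exp_neg_four_mul_le (c : ℝ) {t : ℝ} (ht : 0 < t) :
    c * Real.exp (-4 * c * t) ≤ 1 / (4 * t) := by
  rw [show -4 * c * t = -(4 * c * t) by ring, Real.exp_neg, ← div_eq_mul_inv,
    div_le_div_iff₀ (Real.exp_pos _) (by positivity)]
  linarith [Real.add_one_le_exp (4 * c * t)]

/-- If `γ k > 0` and `∑ a k ^ 2 < ∞`, then
`∫₀ᵀ ( ∑ₖ γₖ^{1/2} e^{−2 γₖ t} aₖ² )² dt ≤ (1/4) (∑ₖ aₖ²)²`. -/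
theorem integral_tsum_sqrt_exp_sq_le
    (γ a : ℕ → ℝ) (hγ : ∀ k, 0 < γ k) (ha : Summable fun k => (a k) ^ 2)
    (T : ℝ) (hT : 0 < T) :
    (∫ t in Set.Ioc (0 : ℝ) T,
        (∑' k, Real.sqrt (γ k) * Real.exp (-2 * γ k * t) * (a k) ^ 2) ^ 2) ≤
      (1 / 4) * (∑' k, (a k) ^ 2) ^ 2 := by
  set A := ∑' k, (a k) ^ 2 with hA
  let F : ℕ → ℝ → ℝ := fun k t => γ k * Real.exp (-4 * γ k * t) * (a k) ^ 2
  have hF0 : ∀ k t, 0 ≤ F k t := fun k t => by have := hγ k; positivity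
  have hFint : ∀ k, IntegrableOn (F k) (Set.Ioi 0) := fun k =>
    ((integrableOn_exp_mul_Ioi (by linarith [hγ k]) 0).const_mul _).mul_const _
  have hFval : ∀ k, ∫ t in Set.Ioi (0 : ℝ), F k t = 1 / 4 * (a k) ^ 2 := fun k =>
    integral_Ioi_mul_exp_neg_four_mul (hγ k) _
  have hG : ∫ t in Set.Ioi (0 : ℝ), ∑' k, F k t = 1 / 4 * A := by
    rw [← integral_tsum_of_summable_integral_norm hFint]
    · simp_rw [hFval, hA, tsum_mul_left]
    · simp_rw [Real.norm_of_nonneg (hF0 _ _), hFval]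
      exact ha.mul_left _
  have hGA : IntegrableOn (fun t => (∑' k, F k t) * A) (Set.Ioi 0) := by
    rcases eq_or_ne A 0 with h0 | h0
    · simp [h0]
    · exact (Integrable.of_integral_ne_zero (by rw [hG]; positivity)).mul_const A
  have hle : ∀ t ∈ Set.Ioi (0 : ℝ),
      (∑' k, Real.sqrt (γ k) * Real.exp (-2 * γ k * t) * (a k) ^ 2) ^ 2 ≤
        (∑' k, F k t) * A := fun t ht => by
    refine tsum_sq_le_tsum_mul_tsum_of_sq_le_mul (fun k => by positivity) (hF0 · t)
      (fun k => sq_nonneg _) (fun k => Eq.le ?_) ?_ ha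
    · simp only [F]
      rw [mul_pow, mul_pow, Real.sq_sqrt (hγ k).le, ← Real.exp_nat_mul]
      push_cast
      ring_nf
    · exact .of_nonneg_of_le (hF0 · t) (fun k => mul_le_mul_of_nonneg_right
        (mul_exp_neg_four_mul_le (γ k) ht) (sq_nonneg _)) (ha.mul_left (1 / (4 * t)))
  have hA0 : 0 ≤ A := tsum_nonneg fun k => sq_nonneg _
  calc _ ≤ ∫ t in Set.Ioc (0 : ℝ) T, (∑' k, F k t) * A :=
        integral_mono_of_nonneg (.of_forall fun t => sq_nonneg _)
          (hGA.mono_set Set.Ioc_subset_Ioi_self)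
          ((ae_restrict_mem measurableSet_Ioc).mono fun t ht => hle t ht.1)
    _ ≤ ∫ t in Set.Ioi (0 : ℝ), (∑' k, F k t) * A :=
        setIntegral_mono_set hGA
          (.of_forall fun t => mul_nonneg (tsum_nonneg (hF0 · t)) hA0)
          Set.Ioc_subset_Ioi_self.eventuallyLE
    _ = 1 / 4 * A ^ 2 := by rw [integral_mul_const, hG]; ring
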